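/- arXiv:math/0407490 — 2 statements merged into one kernel-verified Lean document; each statement's English description precedes it below -/
import Mathlib

section
/- Let Ψ(ξ,η,r) = (Re Φ_z, Im Φ_z, Φ_t) ∈ ℝ³. Then, componentwise: (i) ∂Ψ/∂r = e₀(ξ); (ii) the Wirtinger derivative of Ψ with respect to η equals (√2/(1+|ξ|²))·e₊(ξ); (iii) the Wirtinger derivative of Ψ with respect to ξ equals (r − 2·conj(ξ)·η/(1+|ξ|²))·(√2/(1+|ξ|²))·e₊(ξ) − (2·conj(η)/(1+|ξ|²)²)·e₀(ξ), as vectors in ℂ³. -/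
/-! Each component of `Ψ` is a rational function of `ξ`, `ξ̄`, `η`, `η̄` and `r` whose only
denominator is `(1 + ξξ̄)²`, which never vanishes (`Psi_eq`, `one_add_mul_conj_ne_zero`).
The Wirtinger derivative `∂/∂ζ` obeys the sum, product and quotient rules with `∂ζ/∂ζ = 1` and
`∂ζ̄/∂ζ = 0`. These rules hold for the predicate `HasWirt`, which asserts the
existence of the derivative along every real line, so `deriv` never takes a junk value. The three formulas then
become identities of rational functions in `ξ`, `ξ̄`, `η`, `η̄`, `r`, after rewriting `e₀` and `e₊`
in the same variables (`e0_eq`, `sqrt_two_mul_ePlus`). -/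

open Complex ComplexConjugate

/-- The Wirtinger derivative `∂f/∂ζ = ½(∂f/∂x − i·∂f/∂y)` of a (not necessarily
holomorphic) function `f : ℂ → ℂ` at the point `ζ`. -/
noncomputable def wirt (f : ℂ → ℂ) (ζ : ℂ) : ℂ :=
  (deriv (fun x : ℝ => f (ζ + x)) 0 - I * deriv (fun y : ℝ => f (ζ + y * I)) 0) / 2

/-- `Ψ(ξ,η,r) = (Re Φ_z, Im Φ_z, Φ_t) ∈ ℝ³ ⊂ ℂ³`, where
`Φ_z = (2(η − conj(η)ξ²) + 2ξ(1+|ξ|²)r)/(1+|ξ|²)²` and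
`Φ_t = (−2(η·conj(ξ) + conj(η)·ξ) + (1−|ξ|⁴)r)/(1+|ξ|²)²`. -/
noncomputable def Psi (ξ η : ℂ) (r : ℝ) : Fin 3 → ℂ :=
  let Phiz : ℂ :=
    (2 * (η - conj η * ξ ^ 2) + 2 * ξ * (1 + normSq ξ) * (r : ℂ)) / (1 + normSq ξ) ^ 2
  let Phit : ℝ :=
    (-2 * (η * conj ξ + conj η * ξ).re + (1 - normSq ξ ^ 2) * r) / (1 + normSq ξ) ^ 2
  ![(Phiz.re : ℂ), (Phiz.im : ℂ), (Phit : ℂ)]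

/-- The unit direction vector `e₀(ξ) ∈ ℝ³ ⊂ ℂ³`. -/
noncomputable def e0 (ξ : ℂ) : Fin 3 → ℂ :=
  ![((2 * ξ.re / (1 + normSq ξ) : ℝ) : ℂ), ((2 * ξ.im / (1 + normSq ξ) : ℝ) : ℂ),
    (((1 - normSq ξ) / (1 + normSq ξ) : ℝ) : ℂ)]

/-- The complex null vector `e₊(ξ) ∈ ℂ³`. -/
noncomputable def ePlus (ξ : ℂ) : Fin 3 → ℂ :=
  ![(1 - conj ξ ^ 2) / ((Real.sqrt 2 * (1 + normSq ξ) : ℝ) : ℂ),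
    -I * (1 + conj ξ ^ 2) / ((Real.sqrt 2 * (1 + normSq ξ) : ℝ) : ℂ),
    -2 * conj ξ / ((Real.sqrt 2 * (1 + normSq ξ) : ℝ) : ℂ)]

/-- `f` has directional derivative `a v + b v̄` at `ζ` in every real direction `v`, i.e. its
Wirtinger derivatives are `∂f/∂ζ = a` and `∂f/∂ζ̄ = b`. -/
def HasWirt (f : ℂ → ℂ) (a b ζ : ℂ) : Prop :=
  ∀ v : ℂ, HasDerivAt (fun t : ℝ => f (ζ + t * v)) (a * v + b * conj v) 0

lemma HasWirt.wirt_eq {f : ℂ → ℂ} {a b ζ : ℂ} (h : HasWirt f a b ζ) : wirt f ζ = a := by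
  have h1 := (h 1).deriv
  have h2 := (h I).deriv
  simp only [mul_one, map_one, conj_I] at h1 h2
  rw [wirt, h1, h2]
  linear_combination (-(a - b) / 2) * I_sq

lemma hasWirt_const (c ζ : ℂ) : HasWirt (fun _ => c) 0 0 ζ := fun v => by
  simpa using hasDerivAt_const (0 : ℝ) c

lemma hasWirt_id (ζ : ℂ) : HasWirt (fun w => w) 1 0 ζ := fun v => by
  simpa using ((hasDerivAt_id (0 : ℝ)).ofReal_comp.mul_const v).const_add ζ

lemma hasWirt_conj (ζ : ℂ) : HasWirt (fun w => conj w) 0 1 ζ := fun v => by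
  simpa using ((hasDerivAt_id (0 : ℝ)).ofReal_comp.mul_const (conj v)).const_add (conj ζ)

lemma HasWirt.add {f g : ℂ → ℂ} {a b c d ζ : ℂ} (hf : HasWirt f a b ζ) (hg : HasWirt g c d ζ) :
    HasWirt (fun w => f w + g w) (a + c) (b + d) ζ := fun v => by
  refine ((hf v).add (hg v)).congr_deriv ?_
  ring

lemma HasWirt.sub {f g : ℂ → ℂ} {a b c d ζ : ℂ} (hf : HasWirt f a b ζ) (hg : HasWirt g c d ζ) :
    HasWirt (fun w => f w - g w) (a - c) (b - d) ζ := fun v => by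
  refine ((hf v).sub (hg v)).congr_deriv ?_
  ring

lemma HasWirt.mul {f g : ℂ → ℂ} {a b c d ζ : ℂ} (hf : HasWirt f a b ζ) (hg : HasWirt g c d ζ) :
    HasWirt (fun w => f w * g w) (a * g ζ + f ζ * c) (b * g ζ + f ζ * d) ζ := fun v => by
  refine ((hf v).mul (hg v)).congr_deriv ?_
  simp only [ofReal_zero, zero_mul, add_zero]
  ring

lemma HasWirt.div {f g : ℂ → ℂ} {a b c d ζ : ℂ} (hf : HasWirt f a b ζ) (hg : HasWirt g c d ζ)
    (h0 : g ζ ≠ 0) :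
    HasWirt (fun w => f w / g w) ((a * g ζ - f ζ * c) / g ζ ^ 2)
      ((b * g ζ - f ζ * d) / g ζ ^ 2) ζ := fun v => by
  refine ((hf v).div (hg v) (by simpa using h0)).congr_deriv ?_
  simp only [ofReal_zero, zero_mul, add_zero]
  ring

lemma one_add_mul_conj_ne_zero (ξ : ℂ) : 1 + ξ * conj ξ ≠ 0 := by
  rw [mul_conj]
  exact_mod_cast (add_pos_of_pos_of_nonneg one_pos (normSq_nonneg ξ)).ne'

lemma re_eq_conj (z : ℂ) : (z.re : ℂ) = (z + conj z) / 2 := by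
  rw [add_conj]; push_cast; ring

lemma im_eq_conj (z : ℂ) : (z.im : ℂ) = -I * (z - conj z) / 2 := by
  rw [sub_conj]; push_cast; linear_combination (z.im : ℂ) * I_sq

/-- `Ψ` as a rational expression in `ξ`, `ξ̄`, `η`, `η̄`, `r`. -/
lemma Psi_eq (ξ η : ℂ) (r : ℝ) : Psi ξ η r =
    ![(η + conj η - conj η * (ξ * ξ) - η * (conj ξ * conj ξ)
          + (ξ + conj ξ) * (1 + ξ * conj ξ) * r) / ((1 + ξ * conj ξ) * (1 + ξ * conj ξ)),
      -I * (η - conj η - conj η * (ξ * ξ) + η * (conj ξ * conj ξ)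
          + (ξ - conj ξ) * (1 + ξ * conj ξ) * r) / ((1 + ξ * conj ξ) * (1 + ξ * conj ξ)),
      (-2 * (η * conj ξ + conj η * ξ) + (1 - ξ * conj ξ) * (1 + ξ * conj ξ) * r)
          / ((1 + ξ * conj ξ) * (1 + ξ * conj ξ))] := by
  have h := one_add_mul_conj_ne_zero ξ
  have h2 : conj (2 : ℂ) = 2 := map_ofNat _ 2
  funext i
  fin_cases i <;>
    simp [Psi, re_eq_conj, im_eq_conj, ← mul_conj, -mul_re, -add_re, -mul_im, -add_im, h2,
      mul_comm (conj ξ) ξ] <;>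
    field_simp <;> ring

lemma e0_eq (ξ : ℂ) : e0 ξ =
    ![(ξ + conj ξ) / (1 + ξ * conj ξ), -I * (ξ - conj ξ) / (1 + ξ * conj ξ),
      (1 - ξ * conj ξ) / (1 + ξ * conj ξ)] := by
  have h := one_add_mul_conj_ne_zero ξ
  funext i
  fin_cases i <;> simp [e0, re_eq_conj, im_eq_conj, ← mul_conj] <;> field_simp

/-- The factor `√2` cancels between `e₊` and its coefficient. -/
lemma sqrt_two_mul_ePlus (ξ : ℂ) (i : Fin 3) :
    ((Real.sqrt 2 / (1 + normSq ξ) : ℝ) : ℂ) * ePlus ξ i =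
      ![1 - conj ξ ^ 2, -I * (1 + conj ξ ^ 2), -2 * conj ξ] i / (1 + ξ * conj ξ) ^ 2 := by
  have h := one_add_mul_conj_ne_zero ξ
  have h2 : ((Real.sqrt 2 : ℝ) : ℂ) ≠ 0 := by simp
  fin_cases i <;> simp [ePlus, ← mul_conj] <;> field_simp

/-- the derivatives of `Ψ` with respect to `r`, `η` (Wirtinger) and
`ξ` (Wirtinger) are as given by the null-frame expansion. -/
theorem dPhi_formulas (ξ η : ℂ) (r : ℝ) :
    (∀ i, deriv (fun t : ℝ => Psi ξ η t i) r = e0 ξ i) ∧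
    (∀ i, wirt (fun w : ℂ => Psi ξ w r i) η =
      ((Real.sqrt 2 / (1 + normSq ξ) : ℝ) : ℂ) * ePlus ξ i) ∧
    (∀ i, wirt (fun w : ℂ => Psi w η r i) ξ =
      ((r : ℂ) - 2 * conj ξ * η / (1 + normSq ξ)) *
          ((Real.sqrt 2 / (1 + normSq ξ) : ℝ) : ℂ) * ePlus ξ i -
        (2 * conj η / (1 + normSq ξ) ^ 2) * e0 ξ i) := by
  have h := one_add_mul_conj_ne_zero ξ
  have hX := hasWirt_id ξ
  have hY := hasWirt_conj ξ
  have hE := hasWirt_id η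
  have hF := hasWirt_conj η
  have hN := (hasWirt_const 1 ξ).add (hX.mul hY)
  have hNN := hN.mul hN
  have hNN0 := mul_ne_zero h h
  refine ⟨fun i => ?_, fun i => ?_, fun i => ?_⟩
  · -- each component is affine in `r`
    have aff (A B D : ℂ) : deriv (fun t : ℝ => (A + B * t) / D) r = B / D := by
      have := (((hasDerivAt_id r).ofReal_comp.const_mul B).const_add A).div_const D
      simpa using this.deriv
    rw [e0_eq]
    simp only [Psi_eq]
    fin_cases i
    · refine (aff _ _ _).trans ?_
      simp
      field_simp
    · -- distribute `-I` so that the numerator has the affine shape `A + B * t`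
      simp only [mul_add (-I), ← mul_assoc (-I)]
      refine (aff _ _ _).trans ?_
      simp
      field_simp
    · refine (aff _ _ _).trans ?_
      simp
      field_simp
  · rw [sqrt_two_mul_ePlus]
    simp only [Psi_eq]
    have c (z : ℂ) := hasWirt_const z η
    fin_cases i
    · refine HasWirt.wirt_eq (((((hE.add hF).sub (hF.mul (c _))).sub (hE.mul (c _))).add
        (c _)).div (c _) hNN0) |>.trans ?_
      simp
      field_simp
    · refine HasWirt.wirt_eq (((c _).mul ((((hE.sub hF).sub (hF.mul (c _))).add
        (hE.mul (c _))).add (c _))).div (c _) hNN0) |>.trans ?_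
      simp
      field_simp
    · refine HasWirt.wirt_eq ((((c _).mul ((hE.mul (c _)).add (hF.mul (c _)))).add
        (c _)).div (c _) hNN0) |>.trans ?_
      simp
      field_simp
  · rw [mul_assoc, sqrt_two_mul_ePlus, e0_eq, ← mul_conj]
    simp only [Psi_eq]
    have c (z : ℂ) := hasWirt_const z ξ
    fin_cases i
    · refine HasWirt.wirt_eq ((((c (η + conj η)).sub ((c _).mul (hX.mul hX))).sub
        ((c _).mul (hY.mul hY))).add (((hX.add hY).mul hN).mul (c _)) |>.div hNN hNN0) |>.trans ?_
      simp
      field_simp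
      ring
    · refine HasWirt.wirt_eq ((c _).mul ((((c (η - conj η)).sub ((c _).mul (hX.mul hX))).add
        ((c _).mul (hY.mul hY))).add (((hX.sub hY).mul hN).mul (c _))) |>.div hNN hNN0) |>.trans ?_
      simp
      field_simp
      ring
    · refine HasWirt.wirt_eq (((c _).mul (((c _).mul hY).add ((c _).mul hX))).add
        ((((c 1).sub (hX.mul hY)).mul hN).mul (c _)) |>.div hNN hNN0) |>.trans ?_
      simp
      -- with the denominator opaque, `field_simp` clears it without expanding its powers
      generalize hM : 1 + ξ * conj ξ = M at h ⊢
      field_simp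
      rw [← hM]
      ring
end

section
/- Let I ⊆ ℝ be an open interval, s₀ ∈ I, and (ξ,η) : I → ℂ² a twice continuously differentiable curve satisfying the geodesic equations of the neutral Kähler metric. If ξ'(s₀) = 0, then ξ is constant on I and η is affine: ξ(s) = ξ(s₀) and η(s) = η(s₀) + (s−s₀)·η'(s₀) for all s ∈ I. (The corresponding ruled surface in ℝ³ is a plane, and the geodesic is null.) -/
open Complex ComplexConjugate

/-!
Along a solution, `v = ξ'` satisfies the scalar linear homogeneous equation `v' = a v`, where
`a = 2 conj(ξ) ξ' / (1 + |ξ|²)` is a continuous function of the parameter. Multiplying by the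
integrating factor `exp (-∫ a)` shows that `v` vanishes on all of `I` as soon as it vanishes at one
point (`eq_zero_of_deriv_eq_mul`). Hence `ξ` is constant, every correction term in the second
equation carries a factor `ξ'`, and it reduces to `η'' = 0`, so `η` is affine.
-/

/-- Uniqueness of the zero solution of `v' = a v`, with `a` continuous on an open interval. -/
lemma eq_zero_of_deriv_eq_mul {I : Set ℝ} (hIopen : IsOpen I) (hIconn : I.OrdConnected)
    {s₀ : ℝ} (hs₀ : s₀ ∈ I) {a v : ℝ → ℂ} (ha : ContinuousOn a I)
    (hv : ∀ s ∈ I, HasDerivAt v (a s * v s) s) (h0 : v s₀ = 0) :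
    ∀ s ∈ I, v s = 0 := by
  have hA : ∀ s ∈ I, HasDerivAt (fun t => ∫ x in s₀..t, a x) (a s) s := fun s hs =>
    intervalIntegral.integral_hasDerivAt_right
      (ha.mono (hIconn.uIcc_subset hs₀ hs)).intervalIntegrable
      (ha.stronglyMeasurableAtFilter hIopen s hs) (ha.continuousAt (hIopen.mem_nhds hs))
  have hw : ∀ s ∈ I,
      HasDerivAt (fun t => v t * Complex.exp (-∫ x in s₀..t, a x)) 0 s := fun s hs => by
    refine ((hv s hs).mul (hA s hs).neg.cexp).congr_deriv ?_
    ring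
  intro s hs
  have h := hIopen.is_const_of_deriv_eq_zero hIconn.isPreconnected
    (fun t ht => (hw t ht).differentiableAt.differentiableWithinAt)
    (fun t ht => (hw t ht).deriv) hs hs₀
  simpa [h0, Complex.exp_ne_zero] using h

/-- if a `C²` solution of the geodesic equations of the neutral Kähler
metric on an open interval has `ξ'(s₀) = 0` at some point, then `ξ` is constant and
`η` is affine on the whole interval. -/
theorem null_geodesic_is_plane
    (I : Set ℝ) (hIopen : IsOpen I) (hIconn : I.OrdConnected)
    (s₀ : ℝ) (hs₀ : s₀ ∈ I)
    (ξ η : ℝ → ℂ)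
    (hξ : ContDiffOn ℝ 2 ξ I) (hη : ContDiffOn ℝ 2 η I)
    (hgeo : ∀ s ∈ I,
      deriv (deriv ξ) s - 2 * conj (ξ s) * (deriv ξ s) ^ 2 / (1 + normSq (ξ s)) = 0 ∧
      deriv (deriv η) s - 4 * conj (ξ s) * deriv ξ s * deriv η s / (1 + normSq (ξ s)) +
        2 * (conj (η s) + conj (ξ s) ^ 2 * η s) * (deriv ξ s) ^ 2 /
          (1 + normSq (ξ s)) ^ 2 = 0)
    (hcrit : deriv ξ s₀ = 0) :
    ∀ s ∈ I, ξ s = ξ s₀ ∧ η s = η s₀ + ((s : ℂ) - (s₀ : ℂ)) * deriv η s₀ := by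
  have hdξ : ∀ s ∈ I, DifferentiableAt ℝ ξ s := fun s hs =>
    (hξ.differentiableOn (by norm_num)).differentiableAt (hIopen.mem_nhds hs)
  have hdη : ∀ s ∈ I, DifferentiableAt ℝ η s := fun s hs =>
    (hη.differentiableOn (by norm_num)).differentiableAt (hIopen.mem_nhds hs)
  have hξ' : ContDiffOn ℝ 1 (deriv ξ) I := hξ.deriv_of_isOpen hIopen (by norm_num)
  have hη' : ContDiffOn ℝ 1 (deriv η) I := hη.deriv_of_isOpen hIopen (by norm_num)
  have hpos : ∀ s, (1 + (normSq (ξ s) : ℂ)) ≠ 0 := fun s => by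
    exact_mod_cast (add_pos_of_pos_of_nonneg one_pos (normSq_nonneg (ξ s))).ne'
  have hv : ∀ s ∈ I, deriv ξ s = 0 := by
    refine eq_zero_of_deriv_eq_mul hIopen hIconn hs₀
      (a := fun s => 2 * conj (ξ s) * deriv ξ s / (1 + normSq (ξ s))) ?_ ?_ hcrit
    · have hc := hξ.continuousOn
      refine ContinuousOn.div ?_ ?_ fun s _ => hpos s
      · exact (continuousOn_const.mul (continuous_conj.comp_continuousOn hc)).mul
          hξ'.continuousOn
      · exact continuousOn_const.add
          (continuous_ofReal.comp_continuousOn (continuous_normSq.comp_continuousOn hc))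
    · intro s hs
      have h := ((hξ'.differentiableOn (by norm_num)).differentiableAt
        (hIopen.mem_nhds hs)).hasDerivAt
      rw [sub_eq_zero.mp (hgeo s hs).1] at h
      refine h.congr_deriv ?_
      ring
  have hη'' : ∀ s ∈ I, deriv (deriv η) s = 0 := fun s hs => by
    simpa [hv s hs] using (hgeo s hs).2
  have hη'c : ∀ s ∈ I, deriv η s = deriv η s₀ := fun s hs =>
    hIopen.is_const_of_deriv_eq_zero hIconn.isPreconnected
      (hη'.differentiableOn (by norm_num)) hη'' hs hs₀
  have hlin : ∀ s ∈ I, HasDerivAt (fun t : ℝ => η t - (t : ℂ) * deriv η s₀) 0 s :=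
    fun s hs => by
      have h := (hdη s hs).hasDerivAt.sub ((hasDerivAt_id s).ofReal_comp.mul_const (deriv η s₀))
      refine h.congr_deriv ?_
      simp [hη'c s hs]
  intro s hs
  refine ⟨hIopen.is_const_of_deriv_eq_zero hIconn.isPreconnected
    (fun t ht => (hdξ t ht).differentiableWithinAt) hv hs hs₀, ?_⟩
  have h := hIopen.is_const_of_deriv_eq_zero hIconn.isPreconnected
    (fun t ht => (hlin t ht).differentiableAt.differentiableWithinAt)
    (fun t ht => (hlin t ht).deriv) hs hs₀
  linear_combination h
end
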